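/- Define ψ(t) = 2^{√(log₂(1+t))} − 1, g0 = sup_{k≥0} 2^{k−k²} χ_{[0,2^{k²})}, and a(t,g0) = (1/ψ(t)) ∫_0^t g0(s) ds. Then lim_{t→∞} (M a(·,g0))(t) = 1/log 2, where (Mg)(t) = (1/log t) ∫_1^t g(s) ds/s for t > 1. Consequently, ω(a(·,g0)) = 1/log 2 for every generalized limit ω on the bounded measurable functions on (0,∞) of the form ω = γ ∘ M with γ a generalized limit. -/

import Mathlib

open MeasureTheory Filter Set

/-- `avA ψ f t = (1/ψ(t)) ∫_0^t f(s) ds`. -/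
noncomputable def avA (ψ f : ℝ → ℝ) (t : ℝ) : ℝ := (∫ s in (0:ℝ)..t, f s) / ψ t

/-- A function is bounded on `(0, ∞)`. -/
def BddPos (x : ℝ → ℝ) : Prop := ∃ C : ℝ, ∀ t > (0:ℝ), |x t| ≤ C

/-- A generalized limit (at infinity) on the bounded measurable functions on `(0, ∞)`:
a linear functional sandwiched between `liminf` and `limsup` at infinity. -/
def IsGenLim (ω : (ℝ → ℝ) → ℝ) : Prop :=
  (∀ x y : ℝ → ℝ, Measurable x → BddPos x → Measurable y → BddPos y →
    ω (x + y) = ω x + ω y) ∧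
  (∀ (c : ℝ) (x : ℝ → ℝ), Measurable x → BddPos x → ω (c • x) = c * ω x) ∧
  (∀ x : ℝ → ℝ, Measurable x → BddPos x →
    Filter.liminf x Filter.atTop ≤ ω x ∧ ω x ≤ Filter.limsup x Filter.atTop)

/-- Dilation invariance: `ω (σ_s x) = ω x` where `(σ_s x)(t) = x(t/s)`. -/
def DilInv (ω : (ℝ → ℝ) → ℝ) : Prop :=
  ∀ s > (0:ℝ), ∀ x : ℝ → ℝ, Measurable x → BddPos x →
    ω (fun t => x (t / s)) = ω x

/-- The class `Ω`: nonnegative concave functions on `[0, ∞)` with `ψ(0+) = 0`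
and `ψ(∞) = ∞`. -/
def InOmegaClass (ψ : ℝ → ℝ) : Prop :=
  ConcaveOn ℝ (Set.Ici 0) ψ ∧ (∀ t, 0 ≤ t → 0 ≤ ψ t) ∧
  Filter.Tendsto ψ (nhdsWithin 0 (Set.Ioi 0)) (nhds 0) ∧
  Filter.Tendsto ψ Filter.atTop Filter.atTop

/-- `ψ(t) = 2^√(log₂(1+t)) - 1`. -/
noncomputable def psi0 : ℝ → ℝ := fun t => (2:ℝ) ^ Real.sqrt (Real.logb 2 (1 + t)) - 1

/-- `g0 = sup_{k ≥ 0} 2^(k - k²) χ_[0, 2^(k²))`. -/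
noncomputable def g0 : ℝ → ℝ := fun t =>
  ⨆ k : ℕ, if t < (2:ℝ) ^ (k ^ 2) then (2:ℝ) ^ ((k : ℤ) - (k : ℤ) ^ 2) else 0

/-- `a(t, g0) = (1/ψ(t)) ∫_0^t g0(s) ds`. -/
noncomputable def aG : ℝ → ℝ := fun t => (∫ s in (0:ℝ)..t, g0 s) / psi0 t

/-- The logarithmic Cesàro mean, `(Mg)(t) = (1/log t) ∫_1^t g(s) ds/s` for `t > 1`
and `0` otherwise. -/
noncomputable def MopO (g : ℝ → ℝ) : ℝ → ℝ := fun t =>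
  if 1 < t then (∫ s in (1:ℝ)..t, g s / s) / Real.log t else 0

/-!
Substituting `s = 2 ^ (u ^ 2)` turns `(M g)(2 ^ (U ^ 2))` into the weighted mean
`U⁻² ∫_0^U 2 u h(u) du` of `h(u) = g(2 ^ (u ^ 2))`. For `g = a(·, g0)` the function `h` is bounded
and asymptotically 1-periodic: with `t = 2 ^ ((n + v) ^ 2)` and `0 ≤ v < 1` one has
`∫_0^t g0 ∼ 2 ^ (n + 1)` and `ψ(t) ∼ 2 ^ (n + v)`, so `h(n + v) → 2 ^ (1 - v)`. The convergence is
not uniform near `v = 1`, but dominated convergence on each block `[n, n + 1]` and Stolz–Cesàro with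
weights `2 n + 1 = (n + 1) ^ 2 - n ^ 2` show that the weighted mean tends to
`∫_0^1 2 ^ (1 - v) dv = 1 / log 2`.
-/

open scoped Topology

theorem IsGenLim.eq_of_tendsto {γ : (ℝ → ℝ) → ℝ} (hγ : IsGenLim γ) {x : ℝ → ℝ} {c : ℝ}
    (hmeas : Measurable x) (hbdd : BddPos x) (hx : Tendsto x atTop (𝓝 c)) : γ x = c := by
  obtain ⟨hinf, hsup⟩ := hγ.2.2 x hmeas hbdd
  rw [hx.liminf_eq] at hinf
  rw [hx.limsup_eq] at hsup
  exact le_antisymm hsup hinf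

section LogarithmicMean

theorem measurable_MopO {g : ℝ → ℝ} (hg : Measurable g) : Measurable (MopO g) := by
  have hS : MeasurableSet {q : ℝ × ℝ | 1 < q.2 ∧ q.2 ≤ q.1} :=
    (measurableSet_lt measurable_const measurable_snd).inter
      (measurableSet_le measurable_snd measurable_fst)
  have hparam : Measurable fun t => ∫ s, (Ioc 1 t).indicator (fun s => g s / s) s :=
    (((hg.div measurable_id).comp measurable_snd).indicator
      hS).stronglyMeasurable.integral_prod_right'.measurable
  have hprimitive : MopO g = fun t =>
      if 1 < t then (∫ s, (Ioc 1 t).indicator (fun s => g s / s) s) / Real.log t else 0 := by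
    funext t
    by_cases ht : 1 < t
    · simp only [MopO, if_pos ht, intervalIntegral.integral_of_le ht.le,
        integral_indicator measurableSet_Ioc]
    · simp only [MopO, if_neg ht]
  rw [hprimitive]
  exact Measurable.ite measurableSet_Ioi (hparam.div Real.measurable_log) measurable_const

theorem abs_MopO_le {g : ℝ → ℝ} {C : ℝ} (hC : ∀ s, 1 ≤ s → |g s| ≤ C) (t : ℝ) :
    |MopO g t| ≤ C := by
  by_cases ht : 1 < t
  · have hlog : 0 < Real.log t := Real.log_pos ht
    have hbound : |∫ s in (1 : ℝ)..t, g s / s| ≤ ∫ s in (1 : ℝ)..t, C * s⁻¹ := by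
      refine intervalIntegral.norm_integral_le_of_norm_le (E := ℝ) ht.le
        (.of_forall fun s hs => ?_) ?_
      · have hs0 : 0 < s := one_pos.trans hs.1
        rw [Real.norm_eq_abs, abs_div, abs_of_pos hs0, div_eq_mul_inv]
        gcongr
        exact hC s hs.1.le
      · refine (intervalIntegral.intervalIntegrable_inv (fun s hs => ?_)
          continuousOn_id).const_mul C
        rw [uIcc_of_le ht.le] at hs
        exact (one_pos.trans_le hs.1).ne'
    rw [intervalIntegral.integral_const_mul, integral_inv_of_pos one_pos (one_pos.trans ht),
      div_one] at hbound
    rw [MopO, if_pos ht, abs_div, abs_of_pos hlog]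
    exact (div_le_iff₀ hlog).2 hbound
  · rw [MopO, if_neg ht, abs_zero]
    exact (abs_nonneg _).trans (hC 1 le_rfl)

theorem integral_div_eq_integral_comp_rpow_sq (g : ℝ → ℝ) {b U : ℝ} (hb : 1 ≤ b) (hU : 0 ≤ U) :
    ∫ s in (1 : ℝ)..b ^ (U ^ 2), g s / s =
      Real.log b * ∫ u in (0 : ℝ)..U, 2 * u * g (b ^ (u ^ 2)) := by
  have hb0 : 0 < b := one_pos.trans_le hb
  have hderiv (u : ℝ) : HasDerivAt (fun u : ℝ => b ^ (u ^ 2))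
      (Real.log b * (2 * u) * b ^ (u ^ 2)) u := by
    simpa using (hasDerivAt_pow 2 u).const_rpow hb0
  have hsubst := intervalIntegral.integral_comp_mul_deriv_of_deriv_nonneg (a := 0) (b := U)
    (g := fun s => g s / s) (fun u _ => (hderiv u).continuousAt.continuousWithinAt)
    (fun u _ => hderiv u) fun u hu => by
      have hu0 : 0 < u := by simpa [hU] using hu.1
      have := Real.log_nonneg hb
      positivity
  rw [← intervalIntegral.integral_const_mul]
  simp only [Function.comp_apply, ne_eq, OfNat.ofNat_ne_zero, not_false_eq_true, zero_pow,
    Real.rpow_zero] at hsubst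
  rw [← hsubst]
  refine intervalIntegral.integral_congr fun u _ => ?_
  have : b ^ (u ^ 2) ≠ 0 := (Real.rpow_pos_of_pos hb0 _).ne'
  field_simp

end LogarithmicMean

section AsymptoticallyPeriodic

theorem tendsto_sum_range_div_sum_range {a w : ℕ → ℝ} {L : ℝ} (hw : ∀ n, 0 < w n)
    (hsum : Tendsto (fun n => ∑ i ∈ Finset.range n, w i) atTop atTop)
    (h : Tendsto (fun n => a n / w n) atTop (𝓝 L)) :
    Tendsto (fun n => (∑ i ∈ Finset.range n, a i) / ∑ i ∈ Finset.range n, w i) atTop (𝓝 L) := by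
  have hsmall : (fun n => a n - L * w n) =o[atTop] w := by
    rw [Asymptotics.isLittleO_iff_tendsto fun n hn => absurd hn (hw n).ne']
    simpa only [sub_div, mul_div_cancel_right₀ _ (hw _).ne', sub_self] using h.sub_const L
  have hratio := (hsmall.sum_range (fun n => (hw n).le) hsum).tendsto_div_nhds_zero.add_const L
  rw [zero_add] at hratio
  refine hratio.congr' ?_
  filter_upwards [hsum.eventually_gt_atTop 0] with n hn
  rw [Finset.sum_sub_distrib, ← Finset.mul_sum]
  field_simp
  ring

theorem sum_range_two_mul_add_one {R : Type*} [CommSemiring R] (n : ℕ) :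
    ∑ i ∈ Finset.range n, (2 * (i : R) + 1) = (n : R) ^ 2 := by
  induction n with
  | zero => simp
  | succ n ih => rw [Finset.sum_range_succ, ih]; push_cast; ring

theorem tendsto_two_mul_natCast_add_div (v : ℝ) :
    Tendsto (fun n : ℕ => 2 * (n + v) / (2 * n + 1)) atTop (𝓝 1) := by
  have hden : Tendsto (fun n : ℕ => 2 * (n : ℝ) + 1) atTop atTop :=
    tendsto_atTop_add_const_right _ _ (tendsto_natCast_atTop_atTop.const_mul_atTop two_pos)
  have hone := (hden.const_div_atTop (2 * v - 1)).const_add 1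
  rw [add_zero] at hone
  refine hone.congr fun n => ?_
  field_simp
  ring

variable {h p : ℝ → ℝ} {C : ℝ}

theorem intervalIntegrable_two_mul_mul (hmeas : Measurable h) (hC : ∀ u, 0 ≤ u → |h u| ≤ C)
    {a b : ℝ} (ha : 0 ≤ a) (hb : 0 ≤ b) :
    IntervalIntegrable (fun u => 2 * u * h u) volume a b := by
  refine .continuousOn_mul (g := fun u => 2 * u) ?_ (by fun_prop)
  refine (intervalIntegrable_const (c := C)).mono_fun hmeas.aestronglyMeasurable ?_
  refine (ae_restrict_mem measurableSet_uIoc).mono fun u hu => ?_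
  exact (hC u ((le_min ha hb).trans hu.1.le)).trans (le_abs_self C)

theorem tendsto_integral_two_mul_mul_natCast_succ_div (hmeas : Measurable h)
    (hC : ∀ u, 0 ≤ u → |h u| ≤ C)
    (hlim : ∀ v ∈ Ioo (0 : ℝ) 1, Tendsto (fun n : ℕ => h (n + v)) atTop (𝓝 (p v))) :
    Tendsto (fun n : ℕ => (∫ u in (n : ℝ)..(n + 1 : ℕ), 2 * u * h u) / (2 * n + 1)) atTop
      (𝓝 (∫ v in (0 : ℝ)..1, p v)) := by
  have hshift (n : ℕ) : (∫ u in (n : ℝ)..(n + 1 : ℕ), 2 * u * h u) / (2 * n + 1) =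
      ∫ v in (0 : ℝ)..1, 2 * (n + v) / (2 * n + 1) * h (n + v) := by
    have htranslate := intervalIntegral.integral_comp_add_left (a := 0) (b := 1)
      (fun u => 2 * u * h u) (n : ℝ)
    rw [add_zero] at htranslate
    rw [Nat.cast_succ, ← htranslate, ← intervalIntegral.integral_div]
    exact intervalIntegral.integral_congr fun v _ => by ring
  simp only [hshift]
  refine intervalIntegral.tendsto_integral_filter_of_dominated_convergence (fun _ => 2 * C)
    (.of_forall fun n => (by fun_prop : Measurable _).aestronglyMeasurable)
    (.of_forall fun n => .of_forall fun v hv => ?_) intervalIntegrable_const ?_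
  · rw [uIoc_of_le zero_le_one] at hv
    have hv0 : 0 < v := hv.1
    have hv1 : v ≤ 1 := hv.2
    rw [norm_mul, Real.norm_eq_abs, abs_of_nonneg (by positivity)]
    gcongr
    · rw [div_le_iff₀ (by positivity)]
      linarith [n.cast_nonneg (α := ℝ)]
    · exact hC _ (by positivity)
  · filter_upwards [Measure.ae_ne volume (1 : ℝ)] with v hv hmem
    rw [uIoc_of_le zero_le_one] at hmem
    simpa using (tendsto_two_mul_natCast_add_div v).mul (hlim v ⟨hmem.1, lt_of_le_of_ne hmem.2 hv⟩)

theorem tendsto_integral_two_mul_mul_natCast_div_sq (hmeas : Measurable h)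
    (hC : ∀ u, 0 ≤ u → |h u| ≤ C)
    (hlim : ∀ v ∈ Ioo (0 : ℝ) 1, Tendsto (fun n : ℕ => h (n + v)) atTop (𝓝 (p v))) :
    Tendsto (fun n : ℕ => (∫ u in (0 : ℝ)..n, 2 * u * h u) / (n : ℝ) ^ 2) atTop
      (𝓝 (∫ v in (0 : ℝ)..1, p v)) := by
  have hsum : Tendsto (fun n => ∑ i ∈ Finset.range n, (2 * (i : ℝ) + 1)) atTop atTop := by
    simp only [sum_range_two_mul_add_one]
    exact (tendsto_pow_atTop two_ne_zero).comp tendsto_natCast_atTop_atTop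
  refine (tendsto_sum_range_div_sum_range (fun n => by positivity) hsum
    (tendsto_integral_two_mul_mul_natCast_succ_div hmeas hC hlim)).congr fun n => ?_
  rw [sum_range_two_mul_add_one, intervalIntegral.sum_integral_adjacent_intervals fun k _ =>
    intervalIntegrable_two_mul_mul hmeas hC k.cast_nonneg (k + 1).cast_nonneg, Nat.cast_zero]

theorem tendsto_integral_two_mul_mul_natFloor_div_sq (hC : ∀ u, 0 ≤ u → |h u| ≤ C) :
    Tendsto (fun U : ℝ => (∫ u in (⌊U⌋₊ : ℝ)..U, 2 * u * h u) / U ^ 2) atTop (𝓝 0) := by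
  refine squeeze_zero_norm' ?_ (tendsto_id.const_div_atTop (2 * C))
  filter_upwards [eventually_gt_atTop 0] with U hU
  have hle : (⌊U⌋₊ : ℝ) ≤ U := Nat.floor_le hU.le
  have hC0 : 0 ≤ C := (abs_nonneg _).trans (hC 0 le_rfl)
  have hbound : ‖∫ u in (⌊U⌋₊ : ℝ)..U, 2 * u * h u‖ ≤ 2 * U * C * |U - ⌊U⌋₊| := by
    refine intervalIntegral.norm_integral_le_of_norm_le_const fun u hu => ?_
    rw [uIoc_of_le hle] at hu
    have hu0 : 0 ≤ u := (Nat.cast_nonneg _).trans hu.1.le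
    rw [norm_mul, Real.norm_eq_abs, abs_of_nonneg (by positivity)]
    gcongr
    · exact hu.2
    · exact hC u hu0
  have hfract : |U - ⌊U⌋₊| ≤ 1 := by
    rw [abs_of_nonneg (sub_nonneg.2 hle)]
    linarith [Nat.lt_floor_add_one U]
  rw [norm_div, Real.norm_of_nonneg (sq_nonneg U), id, div_le_div_iff₀ (by positivity) hU]
  calc ‖∫ u in (⌊U⌋₊ : ℝ)..U, 2 * u * h u‖ * U ≤ 2 * U * C * 1 * U := by
        gcongr
        exact hbound.trans (by gcongr)
    _ = 2 * C * U ^ 2 := by ring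

theorem tendsto_integral_two_mul_mul_div_sq (hmeas : Measurable h) (hC : ∀ u, 0 ≤ u → |h u| ≤ C)
    (hlim : ∀ v ∈ Ioo (0 : ℝ) 1, Tendsto (fun n : ℕ => h (n + v)) atTop (𝓝 (p v))) :
    Tendsto (fun U : ℝ => (∫ u in (0 : ℝ)..U, 2 * u * h u) / U ^ 2) atTop
      (𝓝 (∫ v in (0 : ℝ)..1, p v)) := by
  have hfloor := ((tendsto_integral_two_mul_mul_natCast_div_sq hmeas hC hlim).comp
    tendsto_nat_floor_atTop).mul (tendsto_nat_floor_div_atTop (R := ℝ) |>.pow 2)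
  have hadd := hfloor.add (tendsto_integral_two_mul_mul_natFloor_div_sq hC)
  rw [one_pow, mul_one, add_zero] at hadd
  refine hadd.congr' ?_
  filter_upwards [eventually_ge_atTop 1] with U hU
  have hU0 : 0 < U := one_pos.trans_le hU
  have hfloor0 : (⌊U⌋₊ : ℝ) ≠ 0 := Nat.cast_ne_zero.2 (Nat.floor_pos.2 hU).ne'
  rw [← intervalIntegral.integral_add_adjacent_intervals
    (intervalIntegrable_two_mul_mul hmeas hC le_rfl ⌊U⌋₊.cast_nonneg)
    (intervalIntegrable_two_mul_mul hmeas hC ⌊U⌋₊.cast_nonneg hU0.le)]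
  simp only [Function.comp_apply]
  field_simp

end AsymptoticallyPeriodic

theorem rpow_sqrt_logb_sq {b t : ℝ} (hb : 1 < b) (ht : 1 ≤ t) :
    b ^ (√(Real.logb b t) ^ 2) = t := by
  rw [Real.sq_sqrt (Real.logb_nonneg hb ht),
    Real.rpow_logb (one_pos.trans hb) hb.ne' (one_pos.trans_le ht)]

theorem tendsto_sqrt_logb_atTop {b : ℝ} (hb : 1 < b) :
    Tendsto (fun t => √(Real.logb b t)) atTop atTop :=
  Real.tendsto_sqrt_atTop.comp (Real.tendsto_logb_atTop hb)

theorem tendsto_MopO_of_tendsto_rpow_sq {g p : ℝ → ℝ} {b C : ℝ} (hb : 1 < b)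
    (hmeas : Measurable g) (hC : ∀ s, 1 ≤ s → |g s| ≤ C)
    (hlim : ∀ v ∈ Ioo (0 : ℝ) 1,
      Tendsto (fun n : ℕ => g (b ^ (((n : ℝ) + v) ^ 2))) atTop (𝓝 (p v))) :
    Tendsto (MopO g) atTop (𝓝 (∫ v in (0 : ℝ)..1, p v)) := by
  have hbdd (u : ℝ) (_ : 0 ≤ u) : |g (b ^ (u ^ 2))| ≤ C :=
    hC _ (Real.one_le_rpow hb.le (sq_nonneg u))
  have hmean := (tendsto_integral_two_mul_mul_div_sq (h := fun u => g (b ^ (u ^ 2)))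
    (hmeas.comp (by fun_prop)) hbdd hlim).comp (tendsto_sqrt_logb_atTop hb)
  refine hmean.congr' ?_
  filter_upwards [eventually_gt_atTop 1] with t ht
  have hsubst := integral_div_eq_integral_comp_rpow_sq g hb.le (Real.sqrt_nonneg (Real.logb b t))
  have hlogb : 0 < Real.log b := Real.log_pos hb
  have hsq : √(Real.logb b t) ^ 2 = Real.log t / Real.log b :=
    Real.sq_sqrt (Real.logb_nonneg hb ht.le)
  rw [rpow_sqrt_logb_sq hb ht.le] at hsubst
  rw [MopO, if_pos ht, hsubst, Function.comp_apply, hsq]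
  field_simp

section StepFunction

theorem antitone_natCast_sub_sq : Antitone fun k : ℕ => (k : ℤ) - (k : ℤ) ^ 2 :=
  antitone_nat_of_succ_le fun k => by push_cast; nlinarith

theorem bddAbove_range_g0 (t : ℝ) : BddAbove (range fun k : ℕ =>
    if t < (2 : ℝ) ^ (k ^ 2) then (2 : ℝ) ^ ((k : ℤ) - (k : ℤ) ^ 2) else 0) := by
  refine ⟨1, forall_mem_range.2 fun k => ?_⟩
  split_ifs
  · exact zpow_le_one_of_nonpos₀ one_le_two (by simpa using antitone_natCast_sub_sq k.zero_le)
  · exact zero_le_one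

theorem antitone_g0 : Antitone g0 := by
  refine fun s t hst => ciSup_mono (bddAbove_range_g0 s) fun k => ?_
  split_ifs with ht hs
  · rfl
  · exact absurd (hst.trans_lt ht) hs
  · positivity
  · rfl

theorem g0_nonneg (t : ℝ) : 0 ≤ g0 t :=
  Real.iSup_nonneg fun k => by split_ifs <;> positivity

theorem intervalIntegrable_g0 (a b : ℝ) : IntervalIntegrable g0 volume a b :=
  antitone_g0.intervalIntegrable

theorem g0_eq_of_forall_lt {t : ℝ} {k : ℕ} (hk : t < 2 ^ (k ^ 2))
    (hmin : ∀ j < k, (2 : ℝ) ^ (j ^ 2) ≤ t) : g0 t = 2 ^ ((k : ℤ) - (k : ℤ) ^ 2) := by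
  apply le_antisymm
  · refine ciSup_le fun j => ?_
    split_ifs with hj
    · exact zpow_le_zpow_right₀ one_le_two
        (antitone_natCast_sub_sq (not_lt.1 fun hjk => (hmin j hjk).not_gt hj))
    · positivity
  · simpa only [if_pos hk] using! le_ciSup (bddAbove_range_g0 t) k

theorem g0_eq_one {t : ℝ} (ht : t < 1) : g0 t = 1 := by
  simpa using g0_eq_of_forall_lt (t := t) (k := 0) (by simpa using ht) (by simp)

theorem g0_eq_of_mem_Ico {n : ℕ} {t : ℝ} (ht : t ∈ Ico ((2 : ℝ) ^ (n ^ 2)) (2 ^ ((n + 1) ^ 2))) :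
    g0 t = 2 ^ (n + 1) / 2 ^ ((n + 1) ^ 2) := by
  have hmin : ∀ j < n + 1, (2 : ℝ) ^ (j ^ 2) ≤ t := fun j hj =>
    (pow_le_pow_right₀ one_le_two (Nat.pow_le_pow_left (Nat.le_of_lt_succ hj) 2)).trans ht.1
  rw [g0_eq_of_forall_lt ht.2 hmin, zpow_sub₀ two_ne_zero]
  norm_cast

theorem integral_g0_eq_add {n : ℕ} {t : ℝ}
    (ht : t ∈ Icc ((2 : ℝ) ^ (n ^ 2)) (2 ^ ((n + 1) ^ 2))) :
    ∫ s in (0 : ℝ)..t, g0 s = (∫ s in (0 : ℝ)..2 ^ (n ^ 2), g0 s) +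
      (t - 2 ^ (n ^ 2)) * (2 ^ (n + 1) / 2 ^ ((n + 1) ^ 2)) := by
  have hconst : ∫ s in (2 : ℝ) ^ (n ^ 2)..t, g0 s =
      ∫ _ in (2 : ℝ) ^ (n ^ 2)..t, (2 : ℝ) ^ (n + 1) / 2 ^ ((n + 1) ^ 2) :=
    intervalIntegral.integral_congr_Ioo_of_le ht.1 fun s hs =>
      g0_eq_of_mem_Ico ⟨hs.1.le, hs.2.trans_le ht.2⟩
  rw [← intervalIntegral.integral_add_adjacent_intervals (intervalIntegrable_g0 _ (2 ^ (n ^ 2)))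
    (intervalIntegrable_g0 _ _), hconst, intervalIntegral.integral_const, smul_eq_mul]

theorem two_pow_sq_le_two_pow_succ_sq (n : ℕ) : (2 : ℝ) ^ (n ^ 2) ≤ 2 ^ ((n + 1) ^ 2) :=
  pow_le_pow_right₀ one_le_two (Nat.pow_le_pow_left n.le_succ 2)

theorem integral_g0_two_pow_sq (n : ℕ) :
    ∫ s in (0 : ℝ)..2 ^ (n ^ 2), g0 s = 2 * 2 ^ n - 3 + 2 / 2 ^ n := by
  induction n with
  | zero =>
    rw [intervalIntegral.integral_congr_Ioo_of_le (g := fun _ => (1 : ℝ)) (by positivity)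
      fun s hs => g0_eq_one (by simpa using hs.2)]
    norm_num
  | succ n ih =>
    rw [integral_g0_eq_add ⟨two_pow_sq_le_two_pow_succ_sq n, le_rfl⟩, ih]
    have hsq : (2 : ℝ) ^ ((n + 1) ^ 2) = 2 ^ (n ^ 2) * (2 ^ n) ^ 2 * 2 := by ring
    rw [hsq, pow_succ]
    field_simp
    ring

theorem integral_g0_mono {s t : ℝ} (hst : s ≤ t) :
    ∫ x in (0 : ℝ)..s, g0 x ≤ ∫ x in (0 : ℝ)..t, g0 x := by
  rw [← sub_nonneg, intervalIntegral.integral_interval_sub_left (intervalIntegrable_g0 _ _)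
    (intervalIntegrable_g0 _ _)]
  exact intervalIntegral.integral_nonneg hst fun x _ => g0_nonneg x

theorem integral_g0_le_two_pow {n : ℕ} {t : ℝ} (ht : t ≤ 2 ^ ((n + 1) ^ 2)) :
    ∫ s in (0 : ℝ)..t, g0 s ≤ 4 * 2 ^ n := by
  have hsmall : (2 : ℝ) / 2 ^ (n + 1) ≤ 1 := by
    rw [div_le_one (by positivity)]
    exact le_self_pow₀ one_le_two n.succ_ne_zero
  calc ∫ s in (0 : ℝ)..t, g0 s ≤ 2 * 2 ^ (n + 1) - 3 + 2 / 2 ^ (n + 1) :=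
        (integral_g0_mono ht).trans_eq (integral_g0_two_pow_sq (n + 1))
    _ ≤ 4 * 2 ^ n := by linarith [pow_succ (2 : ℝ) n]

theorem rpow_natCast_sq (b : ℝ) (n : ℕ) : b ^ ((n : ℝ) ^ 2) = b ^ (n ^ 2) := by
  exact_mod_cast Real.rpow_natCast b (n ^ 2)

theorem integral_g0_le_two_rpow_sqrt_logb {t : ℝ} (ht : 1 ≤ t) :
    ∫ s in (0 : ℝ)..t, g0 s ≤ 4 * 2 ^ √(Real.logb 2 t) := by
  set u := √(Real.logb 2 t)
  have hu : 0 ≤ u := Real.sqrt_nonneg _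
  have htle : t ≤ 2 ^ ((⌊u⌋₊ + 1) ^ 2) := by
    rw [← rpow_sqrt_logb_sq one_lt_two ht, ← rpow_natCast_sq, Nat.cast_succ]
    refine Real.rpow_le_rpow_of_exponent_le one_le_two ?_
    gcongr
    exact (Nat.lt_floor_add_one u).le
  refine (integral_g0_le_two_pow htle).trans ?_
  rw [← Real.rpow_natCast]
  gcongr
  · exact one_le_two
  · exact Nat.floor_le hu

theorem tendsto_rpow_sq_div_rpow_sq {b v w : ℝ} (hb : 1 < b) (hvw : v < w) :
    Tendsto (fun n : ℕ => b ^ (((n : ℝ) + v) ^ 2) / b ^ (((n : ℝ) + w) ^ 2)) atTop (𝓝 0) := by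
  have hexponent : Tendsto (fun n : ℕ => (v - w) * (2 * (n : ℝ) + (v + w))) atTop atBot :=
    (tendsto_atTop_add_const_right _ _
      (tendsto_natCast_atTop_atTop.const_mul_atTop two_pos)).const_mul_atTop_of_neg (sub_neg.2 hvw)
  refine ((tendsto_rpow_atBot_of_base_gt_one b hb).comp hexponent).congr fun n => ?_
  rw [Function.comp_apply, ← Real.rpow_sub (one_pos.trans hb)]
  ring_nf

theorem tendsto_integral_g0_div_two_pow {v : ℝ} (hv : v ∈ Ico (0 : ℝ) 1) :
    Tendsto (fun n : ℕ => (∫ s in (0 : ℝ)..2 ^ (((n : ℝ) + v) ^ 2), g0 s) / 2 ^ n) atTop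
      (𝓝 2) := by
  have hpow : Tendsto (fun n : ℕ => ((2 : ℝ) ^ n)⁻¹) atTop (𝓝 0) :=
    tendsto_inv_atTop_zero.comp (tendsto_pow_atTop_atTop_of_one_lt one_lt_two)
  have hright := tendsto_rpow_sq_div_rpow_sq one_lt_two hv.2
  have hleft := tendsto_rpow_sq_div_rpow_sq one_lt_two one_pos
  have hlim := (((hpow.const_mul 3).const_sub 2).add ((hpow.pow 2).const_mul 2)).add
    ((hright.sub hleft).const_mul 2)
  simp only [mul_zero, sub_zero, add_zero, ne_eq, OfNat.ofNat_ne_zero, not_false_eq_true,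
    zero_pow] at hlim
  refine hlim.congr fun n => ?_
  have hsucc : (2 : ℝ) ^ (((n : ℝ) + 1) ^ 2) = 2 ^ ((n + 1) ^ 2) := by
    rw [← rpow_natCast_sq, Nat.cast_succ]
  have hmem : (2 : ℝ) ^ (((n : ℝ) + v) ^ 2) ∈ Icc ((2 : ℝ) ^ (n ^ 2)) (2 ^ ((n + 1) ^ 2)) := by
    have hv0 := hv.1
    constructor
    · rw [← rpow_natCast_sq]
      exact Real.rpow_le_rpow_of_exponent_le one_le_two (by gcongr; linarith)
    · rw [← hsucc]
      exact Real.rpow_le_rpow_of_exponent_le one_le_two (by gcongr; exact hv.2.le)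
  rw [integral_g0_eq_add hmem, integral_g0_two_pow_sq, hsucc, rpow_natCast_sq, pow_succ]
  field_simp
  ring

end StepFunction

section Denominator

theorem sqrt_logb_le_sqrt_logb_one_add {b t : ℝ} (hb : 1 < b) (ht : 0 < t) :
    √(Real.logb b t) ≤ √(Real.logb b (1 + t)) :=
  Real.sqrt_le_sqrt (Real.logb_le_logb_of_le hb ht (by linarith))

theorem tendsto_sqrt_logb_one_add_sub {b : ℝ} (hb : 1 < b) :
    Tendsto (fun t => √(Real.logb b (1 + t)) - √(Real.logb b t)) atTop (𝓝 0) := by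
  have hcorrection : Tendsto (fun t => √(Real.logb b (1 + t⁻¹))) atTop (𝓝 0) := by
    have hlim := ((tendsto_inv_atTop_zero (𝕜 := ℝ)).const_add 1).logb (b := b) (by norm_num)
    simpa using hlim.sqrt
  refine squeeze_zero' ?_ ?_ hcorrection
  · filter_upwards [eventually_gt_atTop 0] with t ht
    exact sub_nonneg.2 (sqrt_logb_le_sqrt_logb_one_add hb ht)
  · filter_upwards [eventually_ge_atTop 1] with t ht
    have ht0 : 0 < t := one_pos.trans_le ht
    have hsplit : Real.logb b (1 + t) = Real.logb b t + Real.logb b (1 + t⁻¹) := by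
      rw [← Real.logb_mul ht0.ne' (by positivity), mul_add, mul_inv_cancel₀ ht0.ne', mul_one,
        add_comm]
    have hcorr : 0 ≤ Real.logb b (1 + t⁻¹) :=
      Real.logb_nonneg hb (le_add_of_nonneg_right (inv_nonneg.2 ht0.le))
    rw [sub_le_iff_le_add', hsplit]
    simpa only [Real.sqrt_eq_rpow] using
      Real.rpow_add_le_add_rpow (Real.logb_nonneg hb ht) hcorr (by norm_num) (by norm_num)

theorem tendsto_psi0_div_two_rpow_sqrt_logb :
    Tendsto (fun t => psi0 t / 2 ^ √(Real.logb 2 t)) atTop (𝓝 1) := by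
  have hratio : Tendsto (fun t => (2 : ℝ) ^ (√(Real.logb 2 (1 + t)) - √(Real.logb 2 t))) atTop
      (𝓝 1) := by
    simpa using tendsto_const_nhds.rpow (tendsto_sqrt_logb_one_add_sub one_lt_two)
      (.inl two_ne_zero)
  have hone : Tendsto (fun t => ((2 : ℝ) ^ √(Real.logb 2 t))⁻¹) atTop (𝓝 0) :=
    tendsto_inv_atTop_zero.comp
      ((tendsto_rpow_atTop_of_base_gt_one 2 one_lt_two).comp (tendsto_sqrt_logb_atTop one_lt_two))
  have hlim := hratio.sub hone
  rw [sub_zero] at hlim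
  refine hlim.congr fun t => ?_
  rw [psi0, Real.rpow_sub two_pos, sub_div, one_div]

theorem two_rpow_sqrt_logb_le_two_mul_psi0 {t : ℝ} (ht : 1 ≤ t) :
    2 ^ √(Real.logb 2 t) ≤ 2 * psi0 t := by
  have hone : 1 ≤ √(Real.logb 2 (1 + t)) := by
    rw [Real.one_le_sqrt, Real.le_logb_iff_rpow_le one_lt_two (by linarith), Real.rpow_one]
    linarith
  have hmono : (2 : ℝ) ^ √(Real.logb 2 t) ≤ 2 ^ √(Real.logb 2 (1 + t)) :=
    Real.rpow_le_rpow_of_exponent_le one_le_two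
      (sqrt_logb_le_sqrt_logb_one_add one_lt_two (one_pos.trans_le ht))
  have htwo : (2 : ℝ) ≤ 2 ^ √(Real.logb 2 (1 + t)) := Real.self_le_rpow_of_one_le one_le_two hone
  rw [psi0]
  linarith

end Denominator

theorem measurable_aG : Measurable aG := by
  have hprimitive : Continuous fun t => ∫ s in (0 : ℝ)..t, g0 s :=
    intervalIntegral.continuous_primitive intervalIntegrable_g0 0
  have hpsi : Measurable psi0 := by
    unfold psi0 Real.logb
    fun_prop
  exact hprimitive.measurable.div hpsi

theorem abs_aG_le {t : ℝ} (ht : 1 ≤ t) : |aG t| ≤ 8 := by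
  have hnum : 0 ≤ ∫ s in (0 : ℝ)..t, g0 s :=
    intervalIntegral.integral_nonneg (zero_le_one.trans ht) fun s _ => g0_nonneg s
  have hpow : (0 : ℝ) < 2 ^ √(Real.logb 2 t) := by positivity
  have hpsi := two_rpow_sqrt_logb_le_two_mul_psi0 ht
  have hpsi0 : 0 < psi0 t := by linarith
  rw [aG, abs_of_nonneg (div_nonneg hnum hpsi0.le), div_le_iff₀ hpsi0]
  linarith [integral_g0_le_two_rpow_sqrt_logb ht]

theorem tendsto_aG_two_rpow_sq {v : ℝ} (hv : v ∈ Ico (0 : ℝ) 1) :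
    Tendsto (fun n : ℕ => aG (2 ^ (((n : ℝ) + v) ^ 2))) atTop (𝓝 (2 ^ (1 - v))) := by
  have hadd : Tendsto (fun n : ℕ => (n : ℝ) + v) atTop atTop :=
    tendsto_atTop_add_const_right _ _ tendsto_natCast_atTop_atTop
  have hpsi := tendsto_psi0_div_two_rpow_sqrt_logb.comp
    ((tendsto_rpow_atTop_of_base_gt_one 2 one_lt_two).comp
      ((tendsto_pow_atTop two_ne_zero).comp hadd))
  have hlim := ((tendsto_integral_g0_div_two_pow hv).div hpsi one_ne_zero).div_const (2 ^ v)
  rw [div_one] at hlim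
  rw [Real.rpow_sub two_pos, Real.rpow_one]
  refine hlim.congr fun n => ?_
  have hsqrt : √(Real.logb 2 (2 ^ (((n : ℝ) + v) ^ 2))) = n + v := by
    rw [Real.logb_rpow two_pos (by norm_num), Real.sqrt_sq (add_nonneg n.cast_nonneg hv.1)]
  simp only [Pi.div_apply, Function.comp_apply, hsqrt, aG]
  rw [Real.rpow_add two_pos, Real.rpow_natCast]
  field_simp

theorem integral_rpow_one_sub {b : ℝ} (hb0 : 0 < b) (hb1 : b ≠ 1) :
    ∫ v in (0 : ℝ)..1, b ^ (1 - v) = (b - 1) / Real.log b := by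
  have hlog : Real.log b ≠ 0 := Real.log_ne_zero_of_pos_of_ne_one hb0 hb1
  have hderiv (v : ℝ) : HasDerivAt (fun v => b ^ v / Real.log b) (b ^ v) v := by
    simpa [hlog] using (Real.hasStrictDerivAt_const_rpow hb0 v).hasDerivAt.div_const (Real.log b)
  have hcont : Continuous fun v : ℝ => b ^ v := Real.continuous_const_rpow hb0.ne'
  rw [intervalIntegral.integral_comp_sub_left (fun v => b ^ v),
    intervalIntegral.integral_eq_sub_of_hasDerivAt (fun v _ => hderiv v)
      (hcont.intervalIntegrable _ _)]
  simp [sub_div]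

/-- `lim_{t→∞} (M a(·,g0))(t) = 1/log 2`; consequently every generalized limit of
the form `ω = γ ∘ M` satisfies `ω(a(·,g0)) = 1/log 2` (Connes–Dixmier measurability). -/
theorem Mop_avA_g0_tendsto_and_connes_dixmier :
    Filter.Tendsto (MopO aG) Filter.atTop (nhds (1 / Real.log 2)) ∧
    ∀ γ : (ℝ → ℝ) → ℝ, IsGenLim γ → γ (MopO aG) = 1 / Real.log 2 := by
  have hlim : Tendsto (MopO aG) atTop (𝓝 (1 / Real.log 2)) := by
    have hmean : ∫ v in (0 : ℝ)..1, (2 : ℝ) ^ (1 - v) = 1 / Real.log 2 := by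
      rw [integral_rpow_one_sub two_pos (by norm_num)]
      norm_num
    rw [← hmean]
    exact tendsto_MopO_of_tendsto_rpow_sq one_lt_two measurable_aG (fun _ => abs_aG_le)
      fun v hv => tendsto_aG_two_rpow_sq (Ioo_subset_Ico_self hv)
  have hbdd : BddPos (MopO aG) := ⟨8, fun t _ => abs_MopO_le (fun _ => abs_aG_le) t⟩
  exact ⟨hlim, fun γ hγ => hγ.eq_of_tendsto (measurable_MopO measurable_aG) hbdd hlim⟩
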